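/- Let (K, v_K) be a field with a non-trivial real-valued valuation and let (A, v) be a scalable semi-valued (K, v_K)-algebra which is a domain with ker v = {0}, such that ⋂_{n≥0} φⁿA = {0} for the prime element φ ∈ A below. Let π, θ ∈ A^× be units with v(π) > 0 and v(θ) = v(φ) (so π and θ⁻¹φ lie in A°). Let p, r ∈ ℕ and q, s ≥ 1 be integers with r·q − p·s = 1. Then the kernel of the A°-algebra homomorphism A°[X, Y] → A[φ⁻¹] sending X to π^{−p}(θ⁻¹φ)^{q} and Y to π^{r}(θ⁻¹φ)^{−s} is the ideal generated by X^{s}·Y^{q} − π and X^{r}·Y^{p} − θ⁻¹φ. -/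

import Mathlib

noncomputable section

/-- The unit ball (ring of integers) of a real-valued additive semi-valuation. -/
def AddValuation.unitBall {A : Type*} [CommRing A] (v : AddValuation A (WithTop ℝ)) :
    Subring A where
  carrier := {a | 0 ≤ v a}
  zero_mem' := by simp only [Set.mem_setOf_eq, AddValuation.map_zero]; exact le_top
  one_mem' := by simp only [Set.mem_setOf_eq, AddValuation.map_one]; exact le_refl _
  add_mem' := by
    intro a b ha hb
    exact le_trans (le_min ha hb) (v.map_add a b)
  mul_mem' := by
    intro a b ha hb
    simp only [Set.mem_setOf_eq, AddValuation.map_mul]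
    exact add_nonneg ha hb
  neg_mem' := by
    intro a ha
    simpa only [Set.mem_setOf_eq, AddValuation.map_neg] using ha

/-- A real-valued additive valuation on a field is *non-trivial* if it does not vanish on all
of `K^×`. -/
def AddValuation.IsNontrivial {K : Type*} [Field K] (v : AddValuation K (WithTop ℝ)) : Prop :=
  ∃ x : K, x ≠ 0 ∧ v x ≠ 0

/-- An element `a` is a *constant* of the subring `R` (with respect to the semi-valuation `v`
on the ambient ring) if `a ∈ R`, `a` is not in the kernel of `v`, and `a` divides (within `R`)
every element of `R` of larger or equal value. -/
def AddValuation.IsConstantOn {A : Type*} [CommRing A] (v : AddValuation A (WithTop ℝ))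
    (R : Subring A) (a : A) : Prop :=
  a ∈ R ∧ v a ≠ ⊤ ∧ ∀ b ∈ R, v a ≤ v b → ∃ c ∈ R, a * c = b

/-- The subring `R` of the semi-valued ring `(A, v)` is *scalable* if every value
`r ∈ v(R) \ {∞}` is the value of some constant of `R`. -/
def AddValuation.ScalableOn {A : Type*} [CommRing A] (v : AddValuation A (WithTop ℝ))
    (R : Subring A) : Prop :=
  ∀ r : WithTop ℝ, r ≠ ⊤ → (∃ x ∈ R, v x = r) → ∃ a : A, v.IsConstantOn R a ∧ v a = r

/-!
Write `t = θ⁻¹φ` and `B = A°[X, Y] / (X ^ s * Y ^ q - π, X ^ r * Y ^ p - t)`. The determinant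
condition turns the two relations into `π ^ p * X = t ^ q` and `t ^ s * Y = π ^ r` in `B`, so a
power of `d = π ^ p * t ^ s` carries any given element of `B` into the image of `A°`, which embeds
in `A[φ⁻¹]`. Hence `B → A[φ⁻¹]` is injective as soon as `d` is a nonzerodivisor on `B`; since
`t ^ s` divides `π ^ r` in `B`, it is enough that `π` is one. As `v t = 0`, `t` is a nonzerodivisor
modulo `π`, which makes multiplication by `π`, by `X ^ s * Y ^ q - π` and by `X ^ r * Y ^ p - t`
injective on `A°[X, Y]` modulo the preceding elements of this list, and the first element of such a
list can be moved to the end.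
-/

section RegularPair

variable {S : Type*} [CommRing S]

theorem isSMulRegular_quotient_span_pair_rotate {a f g : S} (ha : IsSMulRegular S a)
    (hf : IsSMulRegular (S ⧸ Ideal.span {a}) f) (hg : IsSMulRegular (S ⧸ Ideal.span {a, f}) g) :
    IsSMulRegular (S ⧸ Ideal.span {f, g}) a := by
  rw [isSMulRegular_quotient_iff_mem_of_smul_mem] at hf hg ⊢
  simp only [smul_eq_mul, Ideal.mem_span_singleton', Ideal.mem_span_pair] at hf hg ⊢
  rintro x ⟨y, z, hyz⟩
  obtain ⟨u, w, rfl⟩ := hg z ⟨x, -y, by linear_combination -hyz⟩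
  obtain ⟨k, hk⟩ := hf (y + w * g) ⟨x - u * g, by linear_combination -hyz⟩
  exact ⟨k, u, ha (by simp only [smul_eq_mul]; linear_combination hyz + f * hk)⟩

end RegularPair

section Monomial

open MvPolynomial

variable {σ R : Type*} [CommRing R]

theorem mem_span_C_monomial_iff {a : R} {d : σ →₀ ℕ} {F : MvPolynomial σ R} :
    F ∈ Ideal.span {C a, monomial d 1} ↔ ∀ n, ¬ d ≤ n → a ∣ F.coeff n := by
  classical
  constructor
  · intro hF n hn
    obtain ⟨G, H, rfl⟩ := Ideal.mem_span_pair.1 hF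
    simp [coeff_mul_monomial', hn, mul_comm G]
  · intro hF
    have hmod : C a ∣ F.modMonomial d := (C_dvd_iff_dvd_coeff _ _).2 fun n ↦ by
      by_cases hn : d ≤ n
      · simp [coeff_modMonomial_of_le _ hn]
      · simpa [coeff_modMonomial_of_not_le _ hn] using hF n hn
    obtain ⟨G, hG⟩ := hmod
    refine Ideal.mem_span_pair.2 ⟨G, F.divMonomial d, ?_⟩
    rw [mul_comm G, ← hG, mul_comm, modMonomial_add_divMonomial]

theorem isSMulRegular_monomial_sub_C_quotient_span_C (a : R) (d : σ →₀ ℕ) :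
    IsSMulRegular (MvPolynomial σ R ⧸ Ideal.span {C a})
      (monomial d 1 - C a : MvPolynomial σ R) := by
  rw [isSMulRegular_quotient_iff_mem_of_smul_mem]
  simp only [smul_eq_mul, Ideal.mem_span_singleton]
  intro F hF
  have hdF : C a ∣ monomial d 1 * F := by
    simpa [sub_mul] using dvd_add hF (dvd_mul_right (C a) F)
  rw [C_dvd_iff_dvd_coeff] at hdF ⊢
  intro n
  simpa [coeff_monomial_mul] using hdF (d + n)

theorem isSMulRegular_monomial_sub_C_quotient_span_C_monomial {a b : R}
    (hab : IsSMulRegular (R ⧸ Ideal.span {a}) b) (d : σ →₀ ℕ) {e : σ →₀ ℕ} (he : e ≠ 0) :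
    IsSMulRegular (MvPolynomial σ R ⧸ Ideal.span {C a, monomial d 1})
      (monomial e 1 - C b : MvPolynomial σ R) := by
  classical
  rw [isSMulRegular_quotient_iff_mem_of_smul_mem] at hab ⊢
  simp only [smul_eq_mul, Ideal.mem_span_singleton, mem_span_C_monomial_iff] at hab ⊢
  intro F hF n
  induction n using WellFoundedLT.induction with
  | ind n ih =>
    intro hn
    have hlow : a ∣ coeff n (monomial e 1 * F) := by
      rw [coeff_monomial_mul', one_mul]
      split_ifs with hen
      · have hlt : n - e < n := tsub_le_self.lt_of_ne fun h ↦
          he (add_eq_left.1 (h ▸ tsub_add_cancel_of_le hen))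
        exact ih (n - e) hlt fun h ↦ hn (h.trans tsub_le_self)
      · exact dvd_zero a
    apply hab
    simpa [sub_mul] using dvd_sub hlow (hF n hn)

theorem isSMulRegular_quotient_span_monomial_sub_C_pair {a b : R} (ha : IsSMulRegular R a)
    (hab : IsSMulRegular (R ⧸ Ideal.span {a}) b) (d : σ →₀ ℕ) {e : σ →₀ ℕ} (he : e ≠ 0) :
    IsSMulRegular (MvPolynomial σ R ⧸
      Ideal.span {(monomial d 1 - C a : MvPolynomial σ R), monomial e 1 - C b}) a := by
  rw [← isSMulRegular_algebraMap_iff (A := MvPolynomial σ R)]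
  refine isSMulRegular_quotient_span_pair_rotate ?_
    (isSMulRegular_monomial_sub_C_quotient_span_C a d) ?_
  · exact fun F G h ↦ ext _ _ fun n ↦ ha (by simpa using congrArg (coeff n) h)
  · rw [algebraMap_eq, Ideal.span_pair_sub_left]
    exact isSMulRegular_monomial_sub_C_quotient_span_C_monomial hab d he

end Monomial

section Exponents

variable {M : Type*} [CommMonoid M] {p q r s : ℕ}

theorem pow_mul_eq_pow_of_det_eq_one (x y : M) (hdet : r * q = p * s + 1) :
    (x ^ s * y ^ q) ^ p * x = (x ^ r * y ^ p) ^ q := by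
  simp only [mul_pow, ← pow_mul, hdet, mul_comm q p, mul_comm s p, pow_succ]
  exact mul_right_comm _ _ _

theorem pow_mul_pow_eq_of_det_eq_one {a a' b b' : M} (ha : a * a' = 1) (hb : b * b' = 1)
    (hdet : r * q = p * s + 1) :
    (a' ^ p * b ^ q) ^ s * (a ^ r * b' ^ s) ^ q = a := by
  calc
    _ = a ^ (r * q) * a' ^ (p * s) * (b ^ (q * s) * b' ^ (q * s)) := by
      simp only [mul_pow, ← pow_mul, mul_comm s q]; ac_rfl
    _ = a * (a * a') ^ (p * s) * (b * b') ^ (q * s) := by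
      simp only [hdet, pow_succ, mul_pow]; ac_rfl
    _ = a := by simp only [ha, hb, one_pow, mul_one]

end Exponents

section Kernel

variable {R : Type*} [CommRing R]

theorem injective_of_smul_mem_bot {B L : Type*} [CommRing B] [CommRing L] [Algebra R B]
    [Algebra R L] (f : B →ₐ[R] L) (hL : Function.Injective (algebraMap R L)) {G : Set B}
    (hG : Algebra.adjoin R G = ⊤) {d : R} (hd : IsSMulRegular B d)
    (hdG : ∀ g ∈ G, d • g ∈ (⊥ : Subalgebra R B)) :
    Function.Injective f := by
  rw [injective_iff_map_eq_zero]
  intro x hx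
  obtain ⟨n, hn⟩ := Algebra.pow_smul_mem_of_smul_subset_of_mem_adjoin d G ⊥
    (Set.image_subset_iff.2 hdG) (hG ▸ Algebra.mem_top : x ∈ Algebra.adjoin R G)
    (algebraMap_mem _ d)
  obtain ⟨c, hc⟩ := Algebra.mem_bot.1 (hn n le_rfl)
  have hc0 : c = 0 := hL (by rw [← f.commutes, hc, map_smul, hx, smul_zero, map_zero])
  refine (hd.pow n).right_eq_zero_of_smul ?_
  rw [← hc, hc0, map_zero]

theorem injective_of_pow_mul_pow_eq_algebraMap {B L : Type*} [CommRing B] [CommRing L] [Algebra R B]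
    [Algebra R L] (f : B →ₐ[R] L) (hL : Function.Injective (algebraMap R L)) {x y : B}
    (hxy : Algebra.adjoin R {x, y} = ⊤) {a b : R} (ha : IsSMulRegular B a) {p q r s : ℕ}
    (hdet : r * q = p * s + 1) (hxa : x ^ s * y ^ q = algebraMap R B a)
    (hxb : x ^ r * y ^ p = algebraMap R B b) :
    Function.Injective f := by
  have hx : algebraMap R B a ^ p * x = algebraMap R B b ^ q := by
    rw [← hxa, ← hxb, pow_mul_eq_pow_of_det_eq_one x y hdet]
  have hy : algebraMap R B b ^ s * y = algebraMap R B a ^ r := by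
    rw [← hxa, ← hxb, mul_comm (x ^ r), mul_comm (x ^ s)]
    exact pow_mul_eq_pow_of_det_eq_one y x (by rw [mul_comm q, hdet, mul_comm p])
  have hbs : IsSMulRegular B (b ^ s) := by
    have har := ha.pow r
    rw [← isSMulRegular_algebraMap_iff (A := B), map_pow] at har ⊢
    rw [← hy, mul_comm] at har
    exact har.of_mul
  refine injective_of_smul_mem_bot f hL hxy ((ha.pow p).mul hbs) ?_
  rintro g (rfl | rfl)
  · refine Algebra.mem_bot.2 ⟨b ^ s * b ^ q, ?_⟩
    simp only [Algebra.smul_def, map_mul, map_pow]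
    linear_combination -algebraMap R B b ^ s * hx
  · refine Algebra.mem_bot.2 ⟨a ^ p * a ^ r, ?_⟩
    simp only [Algebra.smul_def, map_mul, map_pow]
    linear_combination -algebraMap R B a ^ p * hy

open MvPolynomial

/-- The ideal of `R[X, Y]` presenting an algebra in which the given elements `a` and `b` of `R`
become the monomials `X ^ s * Y ^ q` and `X ^ r * Y ^ p`; the variables are `X = X 0` and
`Y = X 1`. -/
abbrev monomialRelationIdeal (a b : R) (p q r s : ℕ) : Ideal (MvPolynomial (Fin 2) R) :=
  Ideal.span {X 0 ^ s * X 1 ^ q - C a, X 0 ^ r * X 1 ^ p - C b}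

variable {a b : R} {p q r s : ℕ}

theorem isSMulRegular_quotient_monomialRelationIdeal (ha : IsSMulRegular R a)
    (hab : IsSMulRegular (R ⧸ Ideal.span {a}) b) (hr : r ≠ 0) :
    IsSMulRegular (MvPolynomial (Fin 2) R ⧸ monomialRelationIdeal a b p q r s) a := by
  have hX (m n : ℕ) : (X 0 ^ m * X 1 ^ n : MvPolynomial (Fin 2) R) =
      monomial (Finsupp.single 0 m + Finsupp.single 1 n) 1 := by
    rw [X_pow_eq_monomial, X_pow_eq_monomial, monomial_mul, one_mul]
  rw [monomialRelationIdeal, hX, hX]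
  refine isSMulRegular_quotient_span_monomial_sub_C_pair ha hab _ fun h ↦ hr ?_
  simpa using DFunLike.congr_fun h 0

theorem ker_aeval_eq_monomialRelationIdeal {L : Type*} [CommRing L] [Algebra R L]
    (hL : Function.Injective (algebraMap R L)) (ha : IsSMulRegular R a)
    (hab : IsSMulRegular (R ⧸ Ideal.span {a}) b) (hdet : r * q = p * s + 1) {x y : L}
    (hxa : x ^ s * y ^ q = algebraMap R L a) (hxb : x ^ r * y ^ p = algebraMap R L b) :
    RingHom.ker (aeval (R := R) ![x, y]) = monomialRelationIdeal a b p q r s := by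
  let mkI := Ideal.Quotient.mkₐ R (monomialRelationIdeal a b p q r s)
  have hle : monomialRelationIdeal a b p q r s ≤ RingHom.ker (aeval (R := R) ![x, y]) := by
    rw [Ideal.span_le]
    rintro F (rfl | rfl) <;> simp [RingHom.mem_ker, hxa, hxb]
  have hr : r ≠ 0 := by rintro rfl; simp at hdet
  have hgen : Algebra.adjoin R {mkI (X 0), mkI (X 1)} = ⊤ := by
    have hX : {X 0, X 1} = Set.range (X : Fin 2 → MvPolynomial (Fin 2) R) := by
      ext F; simp [Fin.exists_fin_two, eq_comm]
    rw [← Set.image_pair, ← AlgHom.map_adjoin, hX, adjoin_range_X, Algebra.map_top,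
      AlgHom.range_eq_top]
    exact Ideal.Quotient.mkₐ_surjective R _
  have hXa : mkI (X 0) ^ s * mkI (X 1) ^ q = mkI (C a) :=
    Ideal.Quotient.eq.2 (Ideal.subset_span (Set.mem_insert _ _))
  have hXb : mkI (X 0) ^ r * mkI (X 1) ^ p = mkI (C b) :=
    Ideal.Quotient.eq.2 (Ideal.subset_span (Set.mem_insert_of_mem _ rfl))
  have hinj : Function.Injective (Ideal.Quotient.liftₐ _ (aeval ![x, y]) hle) :=
    injective_of_pow_mul_pow_eq_algebraMap _ hL hgen
      (isSMulRegular_quotient_monomialRelationIdeal ha hab hr) hdet hXa hXb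
  refine le_antisymm (fun F hF ↦ ?_) hle
  rw [← Ideal.Quotient.eq_zero_iff_mem]
  exact hinj ((RingHom.mem_ker.1 hF).trans (map_zero _).symm)

theorem ker_aeval_inv_pow_mul_pow {L : Type*} [CommRing L] [Algebra R L]
    (hL : Function.Injective (algebraMap R L)) (ha : IsSMulRegular R a)
    (hab : IsSMulRegular (R ⧸ Ideal.span {a}) b) (hdet : r * q = p * s + 1) {a' b' : L}
    (ha' : algebraMap R L a * a' = 1) (hb' : algebraMap R L b * b' = 1) :
    RingHom.ker (aeval (R := R)
      ![a' ^ p * algebraMap R L b ^ q, algebraMap R L a ^ r * b' ^ s]) =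
      monomialRelationIdeal a b p q r s := by
  refine ker_aeval_eq_monomialRelationIdeal hL ha hab hdet
    (pow_mul_pow_eq_of_det_eq_one ha' hb' hdet) ?_
  rw [mul_comm (a' ^ p), mul_comm (_ ^ r), mul_comm (_ ^ r)]
  exact pow_mul_pow_eq_of_det_eq_one hb' ha' (by rw [mul_comm q, hdet, mul_comm p])

end Kernel

section UnitBall

variable {A : Type*} [CommRing A] {v : AddValuation A (WithTop ℝ)} {c x t : v.unitBall}

theorem unitBall_dvd_iff_le (hc : IsUnit (c : A)) : c ∣ x ↔ v (c : A) ≤ v (x : A) := by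
  constructor
  · rintro ⟨k, rfl⟩
    have hk : 0 ≤ v (k : A) := k.2
    simpa [AddValuation.map_mul] using le_add_of_nonneg_right hk
  · intro hcx
    obtain ⟨u, hu⟩ := hc
    have hux : 0 ≤ v (↑u⁻¹ * (x : A)) := calc
      0 = v (↑u⁻¹ * (c : A)) := by rw [← hu, Units.inv_mul, AddValuation.map_one]
      _ ≤ v (↑u⁻¹ * (x : A)) := by
        rw [AddValuation.map_mul, AddValuation.map_mul]
        gcongr
    exact ⟨⟨_, hux⟩, Subtype.ext (by simp [← hu])⟩

theorem isSMulRegular_unitBall_quotient_span_singleton (hc : IsUnit (c : A)) (ht : v (t : A) = 0) :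
    IsSMulRegular (v.unitBall ⧸ Ideal.span {c}) t := by
  rw [isSMulRegular_quotient_iff_mem_of_smul_mem]
  intro x hx
  rw [Ideal.mem_span_singleton, unitBall_dvd_iff_le hc] at hx ⊢
  simpa [AddValuation.map_mul, ht] using hx

theorem isSMulRegular_unitBall (hc : IsUnit (c : A)) : IsSMulRegular v.unitBall c :=
  fun _ _ h ↦ Subtype.ext (hc.mul_left_cancel (congrArg Subtype.val h))

end UnitBall

theorem algebraMap_mul_localizationAway_invSelf {A : Type*} [CommRing A] (φ : A) :
    algebraMap A (Localization.Away φ) φ * Localization.Away.invSelf φ = 1 := by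
  rw [Localization.Away.invSelf, Localization.mk_eq_mk']
  exact IsLocalization.Away.mul_invSelf φ

theorem kernel_aeval_enlargement_case_gimel_general
    {A : Type*} [CommRing A] (v : AddValuation A (WithTop ℝ))
    {φ : A} (hφ : φ ∈ nonZeroDivisors A) (π θ : Aˣ) (hθ : v ↑θ = v φ)
    {p q r s : ℕ} (hdet : r * q = p * s + 1)
    {πel tel : v.unitBall} (hπel : (πel : A) = ↑π) (htel : (tel : A) = (↑θ⁻¹ : A) * φ) :
    RingHom.ker (MvPolynomial.aeval (R := v.unitBall)
        ![algebraMap A (Localization.Away φ) ((↑π⁻¹ : A) ^ p * ((↑θ⁻¹ : A) * φ) ^ q),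
          algebraMap A (Localization.Away φ) ((↑π : A) ^ r * (↑θ : A) ^ s) *
            (Localization.Away.invSelf φ) ^ s]) =
      Ideal.span
        {(MvPolynomial.X 0 : MvPolynomial (Fin 2) v.unitBall) ^ s * MvPolynomial.X 1 ^ q -
           MvPolynomial.C πel,
         (MvPolynomial.X 0 : MvPolynomial (Fin 2) v.unitBall) ^ r * MvPolynomial.X 1 ^ p -
           MvPolynomial.C tel} := by
  have hv : v (tel : A) = 0 := by
    rw [htel, AddValuation.map_mul, ← hθ, ← AddValuation.map_mul, Units.inv_mul,
      AddValuation.map_one]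
  have hunit : IsUnit (πel : A) := hπel ▸ π.isUnit
  have hinj : Function.Injective (algebraMap v.unitBall (Localization.Away φ)) :=
    (IsLocalization.injective _ (Submonoid.powers_le.2 hφ)).comp Subtype.val_injective
  let ι := algebraMap A (Localization.Away φ)
  have hπinv : ι πel * ι ↑π⁻¹ = 1 := by rw [hπel, ← map_mul, Units.mul_inv, map_one]
  have htinv : ι tel * (ι θ * Localization.Away.invSelf φ) = 1 := calc
    _ = ι (↑θ⁻¹ * θ) * (ι φ * Localization.Away.invSelf φ) := by
      rw [htel, map_mul, map_mul]; ring
    _ = 1 := by rw [Units.inv_mul, map_one, one_mul, algebraMap_mul_localizationAway_invSelf]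
  rw [← htel, ← hπel, map_mul, map_mul, map_pow, map_pow, map_pow, map_pow, mul_assoc, ← mul_pow]
  exact ker_aeval_inv_pow_mul_pow hinj (isSMulRegular_unitBall hunit)
    (isSMulRegular_unitBall_quotient_span_singleton hunit hv) hdet hπinv htinv

/-- With `(A, v)` a scalable semi-valued `(K, v_K)`-algebra, a domain with
trivial kernel and `⋂ₙ φⁿA = 0` for the prime `φ`, let `π, θ ∈ A^×` with `v(π) > 0` and
`v(θ) = v(φ)`, and let `p, r ∈ ℕ`, `q, s ≥ 1` with `rq − ps = 1`.  Then the kernel of the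
`A°`-algebra map `A°[X, Y] → A[φ⁻¹]`, `X ↦ π^{−p}(θ⁻¹φ)^q`, `Y ↦ π^{r}(θ⁻¹φ)^{−s}`, is the
ideal generated by `X^s·Y^q − π` and `X^r·Y^p − θ⁻¹φ`. -/
theorem kernel_aeval_enlargement_case_gimel
    {K A : Type*} [Field K] [CommRing A] [IsDomain A] [Algebra K A]
    (vK : AddValuation K (WithTop ℝ)) (hnt : vK.IsNontrivial)
    (v : AddValuation A (WithTop ℝ))
    (hext : ∀ x : K, v (algebraMap K A x) = vK x)
    (hker : ∀ x : A, v x = ⊤ → x = 0)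
    (hscal : v.ScalableOn ⊤)
    (φ : A) (hφ : Prime φ)
    (hsep : ∀ x : A, (∀ n : ℕ, φ ^ n ∣ x) → x = 0)
    (π θ : Aˣ) (hπ : 0 < v ↑π) (hθ : v ↑θ = v φ)
    (p q r s : ℕ) (hq : 1 ≤ q) (hs : 1 ≤ s) (hdet : r * q = p * s + 1)
    (πel tel : v.unitBall)
    (hπel : (πel : A) = ↑π) (htel : (tel : A) = (↑θ⁻¹ : A) * φ) :
    RingHom.ker (MvPolynomial.aeval (R := v.unitBall)
        ![algebraMap A (Localization.Away φ) ((↑π⁻¹ : A) ^ p * ((↑θ⁻¹ : A) * φ) ^ q),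
          algebraMap A (Localization.Away φ) ((↑π : A) ^ r * (↑θ : A) ^ s) *
            (Localization.Away.invSelf φ) ^ s]) =
      Ideal.span
        {(MvPolynomial.X 0 : MvPolynomial (Fin 2) v.unitBall) ^ s * MvPolynomial.X 1 ^ q -
           MvPolynomial.C πel,
         (MvPolynomial.X 0 : MvPolynomial (Fin 2) v.unitBall) ^ r * MvPolynomial.X 1 ^ p -
           MvPolynomial.C tel} := by
  exact kernel_aeval_enlargement_case_gimel_general v
    (mem_nonZeroDivisors_of_ne_zero hφ.ne_zero) π θ hθ hdet hπel htel
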